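/- Let z₁ ∈ (0,1) and γ > 0. The axisymmetric configuration with three interfaces (−z₁, 0, z₁) is a critical point of E_γ if and only if z₁/√(1−z₁²) + 4γ·(z₁ log(1+z₁) + (1−z₁) log(1−z₁)) = 0, i.e. if and only if γ = −(z₁/√(1−z₁²)) / (4·(z₁ log(1+z₁) + (1−z₁) log(1−z₁))). In particular, the uniformly distributed configuration (−1/2, 0, 1/2) is a critical point of E_γ exactly for γ = −1/(2√3·log(3/4)). -/

import Mathlib

/-!
An odd number of interfaces placed symmetrically about the equator makes the pattern odd up to a
null set.  Hence the mass vanishes, `ξ` is even, `v` is odd, and so is the Euler–Lagrange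
expression; the middle interface, which is the equator, then forces `λ = 0`.  For `(-z₁, 0, z₁)`
a single equation remains, the one at `z₁`.  There `ξ(t) = 2 z₁ - 1 - t` on `[0, z₁]`, and the
partial fractions `(2 z₁ - 1 - t) / (1 - t²) = z₁ / (1 + t) - (1 - z₁) / (1 - t)` give
`v(z₁) = z₁ log (1 + z₁) + (1 - z₁) log (1 - z₁)`.
-/

/-- The axisymmetric step pattern with `n` interfaces located at `z 1 < ⋯ < z n`
(with `z 0 = -1`, `z (n+1) = 1`): `u(t) = (-1)^(k+1)` for `t ∈ [z k, z (k+1))`,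
so `u = -1` on `[-1, z 1)`. -/
noncomputable def pattern (n : ℕ) (z : ℕ → ℝ) (t : ℝ) : ℝ :=
  (-1 : ℝ) ^ (((Finset.Icc 1 n).filter (fun i => z i ≤ t)).card + 1)

/-- The mass `m = (1/2)∫_{-1}^1 u(t) dt`. -/
noncomputable def mass (n : ℕ) (z : ℕ → ℝ) : ℝ :=
  (1 / 2) * ∫ t in (-1 : ℝ)..1, pattern n z t

/-- `ξ(t) = ∫_{-1}^t (u(s) - m) ds`. -/
noncomputable def xi (n : ℕ) (z : ℕ → ℝ) (t : ℝ) : ℝ :=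
  ∫ s in (-1 : ℝ)..t, (pattern n z s - mass n z)

/-- The potential `v(t) = ∫_0^t ξ(s)/(1-s²) ds`. -/
noncomputable def pot (n : ℕ) (z : ℕ → ℝ) (t : ℝ) : ℝ :=
  ∫ s in (0 : ℝ)..t, xi n z s / (1 - s ^ 2)

/-- `z` is an axisymmetric configuration with `n` interfaces:
`-1 = z 0 < z 1 < ⋯ < z n < z (n+1) = 1`. -/
def IsConfig (n : ℕ) (z : ℕ → ℝ) : Prop :=
  z 0 = -1 ∧ z (n + 1) = 1 ∧ ∀ i j, i < j → j ≤ n + 1 → z i < z j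

/-- The configuration is a critical point of `E_γ`: the Euler–Lagrange equation
`κ_g(z_k) + 4γ v(z_k) = λ` holds at every interface `z 1, …, z n`, with a single
constant `λ`; here `κ_g(z_k) = (-1)^(k+1) z_k / √(1 - z_k²)` is the signed geodesic
curvature of the interface circle with respect to the outer normal of `{u = 1}`. -/
def IsCritical (γ : ℝ) (n : ℕ) (z : ℕ → ℝ) : Prop :=
  ∃ lam : ℝ, ∀ k, 1 ≤ k → k ≤ n →
    (-1 : ℝ) ^ (k + 1) * z k / Real.sqrt (1 - z k ^ 2) + 4 * γ * pot n z (z k) = lam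

open MeasureTheory

lemma pattern_eq_neg_prod (n : ℕ) (z : ℕ → ℝ) (t : ℝ) :
    pattern n z t = -∏ i ∈ Finset.Icc 1 n, if z i ≤ t then -1 else 1 := by
  rw [pattern, pow_succ, mul_neg_one, Finset.prod_ite, Finset.prod_const, Finset.prod_const_one,
    mul_one]

lemma abs_pattern (n : ℕ) (z : ℕ → ℝ) (t : ℝ) : |pattern n z t| = 1 := by
  rw [pattern, abs_pow, abs_neg, abs_one, one_pow]

lemma measurable_pattern (n : ℕ) (z : ℕ → ℝ) : Measurable (pattern n z) := by
  simp only [funext (pattern_eq_neg_prod n z)]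
  exact (Finset.measurable_fun_prod _ fun i _ =>
    Measurable.ite measurableSet_Ici measurable_const measurable_const).neg

lemma intervalIntegrable_pattern (n : ℕ) (z : ℕ → ℝ) (a b : ℝ) :
    IntervalIntegrable (pattern n z) volume a b :=
  (intervalIntegrable_const (c := (1 : ℝ))).mono_fun (measurable_pattern n z).aestronglyMeasurable
    (Filter.Eventually.of_forall fun t => by simp [abs_pattern])

section Config

variable {n k : ℕ} {z : ℕ → ℝ} {t : ℝ}

lemma IsConfig.le (hz : IsConfig n z) {i j : ℕ} (hij : i ≤ j) (hj : j ≤ n + 1) : z i ≤ z j := by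
  rcases hij.eq_or_lt with rfl | h
  · exact le_rfl
  · exact (hz.2.2 i j h hj).le

lemma IsConfig.pattern_eq (hz : IsConfig n z) (hk : k ≤ n) (ht : t ∈ Set.Ico (z k) (z (k + 1))) :
    pattern n z t = (-1) ^ (k + 1) := by
  have hfilter : (Finset.Icc 1 n).filter (fun i => z i ≤ t) = Finset.Icc 1 k := by
    ext i
    simp only [Finset.mem_filter, Finset.mem_Icc]
    refine ⟨fun ⟨⟨h1, _⟩, hit⟩ => ⟨h1, ?_⟩, fun ⟨h1, hik⟩ =>
      ⟨⟨h1, hik.trans hk⟩, (hz.le hik (by lia)).trans ht.1⟩⟩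
    by_contra! hki
    exact (ht.2.trans_le (hz.le hki (by lia))).not_ge hit
  rw [pattern, hfilter, Nat.card_Icc, Nat.add_sub_cancel]

lemma IsConfig.xi_eq (hz : IsConfig n z) (hk : k ≤ n) (ht : t ∈ Set.Icc (z k) (z (k + 1))) :
    xi n z t = xi n z (z k) + ((-1) ^ (k + 1) - mass n z) * (t - z k) := by
  have hint (a b : ℝ) : IntervalIntegrable (fun s => pattern n z s - mass n z) volume a b :=
    (intervalIntegrable_pattern n z a b).sub intervalIntegrable_const
  have hpiece : ∫ s in z k..t, (pattern n z s - mass n z)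
      = ∫ _ in z k..t, ((-1) ^ (k + 1) - mass n z) := by
    refine intervalIntegral.integral_congr_Ioo_of_le ht.1 fun s hs => ?_
    simp only [hz.pattern_eq hk ⟨hs.1.le, hs.2.trans_le ht.2⟩]
  rw [xi, ← intervalIntegral.integral_add_adjacent_intervals (hint _ (z k)) (hint _ _), hpiece,
    intervalIntegral.integral_const, smul_eq_mul, mul_comm, xi]

end Config

/-- The interfaces `z 1, …, z n` are placed symmetrically about the equator `0`. -/
def IsReflectionSymmetric (n : ℕ) (z : ℕ → ℝ) : Prop :=
  ∀ k, 1 ≤ k → k ≤ n → z (n + 1 - k) = -z k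

/-- The left-hand side of the Euler–Lagrange equation at the interface `z k`. -/
noncomputable def eulerLagrange (γ : ℝ) (n : ℕ) (z : ℕ → ℝ) (k : ℕ) : ℝ :=
  (-1 : ℝ) ^ (k + 1) * z k / Real.sqrt (1 - z k ^ 2) + 4 * γ * pot n z (z k)

namespace IsReflectionSymmetric

variable {n : ℕ} {z : ℕ → ℝ}

lemma pattern_neg (hz : IsReflectionSymmetric n z) (hn : Odd n) {t : ℝ}
    (ht : ∀ i ∈ Finset.Icc 1 n, z i ≠ t) : pattern n z (-t) = -pattern n z t := by
  have hflip (i : ℕ) (hi : i ∈ Finset.Icc 1 n) :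
      (if t ≤ z i then (-1 : ℝ) else 1) = -1 * if z i ≤ t then -1 else 1 := by
    rcases (ht i hi).lt_or_gt with h | h
    · simp [h.le, h.not_ge]
    · simp [h.le, h.not_ge]
  have hreflect : ∏ i ∈ Finset.Icc 1 n, (if z i ≤ -t then (-1 : ℝ) else 1)
      = ∏ i ∈ Finset.Icc 1 n, if t ≤ z i then -1 else 1 := by
    refine Finset.prod_nbij' (n + 1 - ·) (n + 1 - ·) (by grind) (by grind) (by grind) (by grind)
      fun i hi => ?_
    obtain ⟨hi₁, hin⟩ := Finset.mem_Icc.1 hi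
    simp only [hz i hi₁ hin, le_neg]
  rw [pattern_eq_neg_prod, pattern_eq_neg_prod, hreflect, Finset.prod_congr rfl hflip,
    Finset.prod_mul_distrib, Finset.prod_const, Nat.card_Icc, Nat.add_sub_cancel, hn.neg_one_pow,
    neg_one_mul]

lemma integral_pattern (hz : IsReflectionSymmetric n z) (hn : Odd n) (a : ℝ) :
    ∫ t in -a..a, pattern n z t = 0 := by
  have hodd : ∀ᵐ t, pattern n z (-t) = -pattern n z t := by
    have hnull := ((Finset.Icc 1 n).image z).finite_toSet.measure_zero volume
    filter_upwards [measure_eq_zero_iff_ae_notMem.1 hnull] with t ht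
    exact hz.pattern_neg hn fun i hi h => ht (by simpa [h] using Finset.mem_image_of_mem z hi)
  have hself : ∫ t in -a..a, pattern n z t = -∫ t in -a..a, pattern n z t := calc
    _ = ∫ t in -a..a, pattern n z (-t) := by simp
    _ = ∫ t in -a..a, -pattern n z t :=
      intervalIntegral.integral_congr_ae (hodd.mono fun _ ht _ => ht)
    _ = -∫ t in -a..a, pattern n z t := intervalIntegral.integral_neg
  linarith

lemma mass_eq_zero (hz : IsReflectionSymmetric n z) (hn : Odd n) : mass n z = 0 := by
  rw [mass, hz.integral_pattern hn, mul_zero]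

lemma xi_neg (hz : IsReflectionSymmetric n z) (hn : Odd n) (t : ℝ) : xi n z (-t) = xi n z t := by
  have hint := intervalIntegrable_pattern n z
  simp only [xi, hz.mass_eq_zero hn, sub_zero]
  rw [← intervalIntegral.integral_add_adjacent_intervals (hint (-1) (-t)) (hint (-t) t),
    hz.integral_pattern hn, add_zero]

lemma pot_neg (hz : IsReflectionSymmetric n z) (hn : Odd n) (t : ℝ) :
    pot n z (-t) = -pot n z t := by
  have hsubst := intervalIntegral.integral_comp_neg (a := 0) (b := t)
    fun s => xi n z s / (1 - s ^ 2)
  simp only [hz.xi_neg hn, neg_sq, neg_zero] at hsubst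
  rw [pot, pot, intervalIntegral.integral_symm, hsubst]

lemma eulerLagrange_reflect (hz : IsReflectionSymmetric n z) (hn : Odd n) (γ : ℝ) {k : ℕ}
    (hk : 1 ≤ k) (hkn : k ≤ n) :
    eulerLagrange γ n z (n + 1 - k) = -eulerLagrange γ n z k := by
  have hsign : (-1 : ℝ) ^ (n + 1 - k + 1) = (-1) ^ (k + 1) :=
    neg_one_pow_congr (by grind)
  rw [eulerLagrange, eulerLagrange, hz k hk hkn, hz.pot_neg hn, hsign, neg_sq]
  ring

lemma isCritical_iff (hz : IsReflectionSymmetric n z) (hn : Odd n) (γ : ℝ) :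
    IsCritical γ n z ↔ ∀ k, 1 ≤ k → k ≤ n → eulerLagrange γ n z k = 0 := by
  refine ⟨fun ⟨lam, h⟩ k hk hkn => ?_, fun h => ⟨0, h⟩⟩
  obtain ⟨j, rfl⟩ := hn
  have hmiddle := hz.eulerLagrange_reflect ⟨j, rfl⟩ γ (k := j + 1) (by lia) (by lia)
  rw [show 2 * j + 1 + 1 - (j + 1) = j + 1 by lia] at hmiddle
  have hlam : eulerLagrange γ (2 * j + 1) z (j + 1) = lam := h _ (by lia) (by lia)
  have hlamk : eulerLagrange γ (2 * j + 1) z k = lam := h k hk hkn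
  linarith

end IsReflectionSymmetric

/-- The configuration `(-z₁, 0, z₁)`; the entries beyond the endpoint `z 4 = 1` are junk. -/
noncomputable def threeInterfaces (z₁ : ℝ) : ℕ → ℝ :=
  fun k => if k = 0 then -1 else if k = 1 then -z₁ else if k = 2 then 0
    else if k = 3 then z₁ else 1

lemma isReflectionSymmetric_threeInterfaces (z₁ : ℝ) :
    IsReflectionSymmetric 3 (threeInterfaces z₁) := by
  intro k hk hk3
  interval_cases k <;> simp [threeInterfaces]

lemma integral_sub_div_one_sub_sq (c : ℝ) {b : ℝ} (hb : b ∈ Set.Ioo (-1 : ℝ) 1) :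
    ∫ s in (0 : ℝ)..b, (2 * c - 1 - s) / (1 - s ^ 2)
      = c * Real.log (1 + b) + (1 - c) * Real.log (1 - b) := by
  have hIcc : Set.uIcc 0 b ⊆ Set.Ioo (-1) 1 :=
    Set.ordConnected_Ioo.uIcc_subset ⟨by norm_num, by norm_num⟩ hb
  have hderiv (s : ℝ) (hs : s ∈ Set.uIcc 0 b) :
      HasDerivAt (fun s => c * Real.log (1 + s) + (1 - c) * Real.log (1 - s))
        ((2 * c - 1 - s) / (1 - s ^ 2)) s := by
    have hadd : 1 + s ≠ 0 := by linarith [(hIcc hs).1]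
    have hsub : 1 - s ≠ 0 := by linarith [(hIcc hs).2]
    have hpartial : (2 * c - 1 - s) / (1 - s ^ 2)
        = c * (1 / (1 + s)) + (1 - c) * (-1 / (1 - s)) := by
      rw [show 1 - s ^ 2 = (1 + s) * (1 - s) by ring]
      field_simp
      ring
    rw [hpartial]
    exact ((((hasDerivAt_id' s).const_add 1).log hadd).const_mul c).add
      ((((hasDerivAt_id' s).const_sub 1).log hsub).const_mul (1 - c))
  have hcont : ContinuousOn (fun s => (2 * c - 1 - s) / (1 - s ^ 2)) (Set.uIcc 0 b) :=
    ContinuousOn.div (by fun_prop) (by fun_prop) fun s hs => by nlinarith [(hIcc hs).1, (hIcc hs).2]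
  rw [intervalIntegral.integral_eq_sub_of_hasDerivAt hderiv hcont.intervalIntegrable]
  simp

section ThreeInterfaces

variable {z₁ : ℝ}

lemma isConfig_threeInterfaces (hz₁ : z₁ ∈ Set.Ioo (0 : ℝ) 1) :
    IsConfig 3 (threeInterfaces z₁) := by
  obtain ⟨hpos, hlt⟩ := hz₁
  refine ⟨rfl, rfl, fun i j hij hj => ?_⟩
  interval_cases j <;> interval_cases i <;> simp only [threeInterfaces] <;> norm_num <;> linarith

lemma xi_threeInterfaces (hz₁ : z₁ ∈ Set.Ioo (0 : ℝ) 1) {t : ℝ} (ht : t ∈ Set.Icc 0 z₁) :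
    xi 3 (threeInterfaces z₁) t = 2 * z₁ - 1 - t := by
  have hz := isConfig_threeInterfaces hz₁
  have hmass := (isReflectionSymmetric_threeInterfaces z₁).mass_eq_zero (by decide)
  have hstep (k : ℕ) (hk : k ≤ 3) (s : ℝ)
      (hs : s ∈ Set.Icc (threeInterfaces z₁ k) (threeInterfaces z₁ (k + 1))) :
      xi 3 (threeInterfaces z₁) s = xi 3 (threeInterfaces z₁) (threeInterfaces z₁ k)
        + (-1) ^ (k + 1) * (s - threeInterfaces z₁ k) := by
    rw [hz.xi_eq hk hs, hmass, sub_zero]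
  have hpole : xi 3 (threeInterfaces z₁) (-1) = 0 := intervalIntegral.integral_same
  have hsouth : xi 3 (threeInterfaces z₁) (-z₁)
      = xi 3 (threeInterfaces z₁) (-1) + (-1) ^ 1 * (-z₁ - -1) :=
    hstep 0 (by lia) _ (Set.right_mem_Icc.2 (hz.le (by lia) (by lia)))
  have hequator : xi 3 (threeInterfaces z₁) 0
      = xi 3 (threeInterfaces z₁) (-z₁) + (-1) ^ 2 * (0 - -z₁) :=
    hstep 1 (by lia) _ (Set.right_mem_Icc.2 (hz.le (by lia) (by lia)))
  have hnorth : xi 3 (threeInterfaces z₁) t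
      = xi 3 (threeInterfaces z₁) 0 + (-1) ^ 3 * (t - 0) := hstep 2 (by lia) t ht
  rw [hnorth, hequator, hsouth, hpole]
  ring

lemma pot_threeInterfaces (hz₁ : z₁ ∈ Set.Ioo (0 : ℝ) 1) :
    pot 3 (threeInterfaces z₁) z₁
      = z₁ * Real.log (1 + z₁) + (1 - z₁) * Real.log (1 - z₁) := by
  rw [← integral_sub_div_one_sub_sq z₁ ⟨by linarith [hz₁.1], hz₁.2⟩]
  refine intervalIntegral.integral_congr fun s hs => ?_
  rw [Set.uIcc_of_le hz₁.1.le] at hs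
  simp only [xi_threeInterfaces hz₁ hs]

lemma isCritical_threeInterfaces_iff (hz₁ : z₁ ∈ Set.Ioo (0 : ℝ) 1) (γ : ℝ) :
    IsCritical γ 3 (threeInterfaces z₁) ↔
      z₁ / Real.sqrt (1 - z₁ ^ 2)
        + 4 * γ * (z₁ * Real.log (1 + z₁) + (1 - z₁) * Real.log (1 - z₁)) = 0 := by
  have hz := isReflectionSymmetric_threeInterfaces z₁
  have hlast : eulerLagrange γ 3 (threeInterfaces z₁) 3 = z₁ / Real.sqrt (1 - z₁ ^ 2)
      + 4 * γ * (z₁ * Real.log (1 + z₁) + (1 - z₁) * Real.log (1 - z₁)) := by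
    rw [← pot_threeInterfaces hz₁]
    norm_num [eulerLagrange, threeInterfaces]
  have hfirst : eulerLagrange γ 3 (threeInterfaces z₁) 1
      = -eulerLagrange γ 3 (threeInterfaces z₁) 3 :=
    hz.eulerLagrange_reflect (by decide) γ (by lia) le_rfl
  have hmiddle : eulerLagrange γ 3 (threeInterfaces z₁) 2
      = -eulerLagrange γ 3 (threeInterfaces z₁) 2 :=
    hz.eulerLagrange_reflect (by decide) γ (k := 2) (by lia) (by lia)
  rw [hz.isCritical_iff (by decide), ← hlast]
  refine ⟨fun h => h 3 (by lia) le_rfl, fun h k hk hk3 => ?_⟩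
  interval_cases k <;> linarith

end ThreeInterfaces

lemma add_four_mul_mul_eq_zero_iff {x L γ : ℝ} (hx : x ≠ 0) (hγ : γ ≠ 0) :
    x + 4 * γ * L = 0 ↔ γ = -x / (4 * L) := by
  rcases eq_or_ne L 0 with rfl | hL
  · -- Both sides fail: the left is `x = 0`, the right is `γ = -x / 0 = 0`.
    simp [hx, hγ]
  · rw [eq_div_iff (by positivity)]
    constructor <;> intro h <;> linarith

lemma half_div_sqrt_one_sub_half_sq :
    (1 / 2 : ℝ) / Real.sqrt (1 - (1 / 2) ^ 2) = 1 / Real.sqrt 3 := by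
  rw [show (1 - (1 / 2) ^ 2 : ℝ) = 3 / 2 ^ 2 by norm_num, Real.sqrt_div (by norm_num),
    Real.sqrt_sq (by norm_num)]
  field_simp

lemma half_mul_log_add_half_mul_log :
    (1 / 2 : ℝ) * Real.log (1 + 1 / 2) + (1 - 1 / 2) * Real.log (1 - 1 / 2)
      = 1 / 2 * Real.log (3 / 4) := by
  rw [show (3 / 4 : ℝ) = (1 + 1 / 2) * (1 - 1 / 2) by norm_num,
    Real.log_mul (by norm_num) (by norm_num)]
  ring

theorem three_interface_criticality_general (z₁ : ℝ) (hz₁ : z₁ ∈ Set.Ioo (0 : ℝ) 1)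
    (γ : ℝ) (hγ : γ ≠ 0) :
    (IsCritical γ 3 (threeInterfaces z₁) ↔
      z₁ / Real.sqrt (1 - z₁ ^ 2)
        + 4 * γ * (z₁ * Real.log (1 + z₁) + (1 - z₁) * Real.log (1 - z₁)) = 0) ∧
    (IsCritical γ 3 (threeInterfaces z₁) ↔
      γ = -(z₁ / Real.sqrt (1 - z₁ ^ 2))
            / (4 * (z₁ * Real.log (1 + z₁) + (1 - z₁) * Real.log (1 - z₁)))) ∧
    (z₁ = 1 / 2 →
      (IsCritical γ 3 (threeInterfaces z₁) ↔
        γ = -1 / (2 * Real.sqrt 3 * Real.log (3 / 4)))) := by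
  have hcurv : z₁ / Real.sqrt (1 - z₁ ^ 2) ≠ 0 :=
    (div_pos hz₁.1 (Real.sqrt_pos.2 (by nlinarith [hz₁.1, hz₁.2]))).ne'
  have hcrit := isCritical_threeInterfaces_iff hz₁ γ
  have hquot := hcrit.trans (add_four_mul_mul_eq_zero_iff hcurv hγ)
  refine ⟨hcrit, hquot, ?_⟩
  rintro rfl
  rw [hquot, half_div_sqrt_one_sub_half_sq, half_mul_log_add_half_mul_log,
    show -(1 / Real.sqrt 3) / (4 * (1 / 2 * Real.log (3 / 4)))
      = -1 / (2 * Real.sqrt 3 * Real.log (3 / 4)) by ring]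

/-- For `z₁ ∈ (0,1)` and `γ > 0`, the axisymmetric configuration with
three interfaces `(-z₁, 0, z₁)` is a critical point of `E_γ` iff
`z₁/√(1−z₁²) + 4γ(z₁ log(1+z₁) + (1−z₁) log(1−z₁)) = 0`, iff
`γ = −(z₁/√(1−z₁²)) / (4(z₁ log(1+z₁) + (1−z₁) log(1−z₁)))`.  In particular, for
`z₁ = 1/2` (the uniformly distributed configuration `(-1/2, 0, 1/2)`) criticality holds
exactly for `γ = −1/(2√3 log(3/4))`. -/
theorem three_interface_criticality (z₁ : ℝ) (hz₁ : z₁ ∈ Set.Ioo (0 : ℝ) 1)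
    (γ : ℝ) (hγ : 0 < γ) :
    (IsCritical γ 3
        (fun k => if k = 0 then -1 else if k = 1 then -z₁ else if k = 2 then 0
          else if k = 3 then z₁ else 1) ↔
      z₁ / Real.sqrt (1 - z₁ ^ 2)
        + 4 * γ * (z₁ * Real.log (1 + z₁) + (1 - z₁) * Real.log (1 - z₁)) = 0) ∧
    (IsCritical γ 3
        (fun k => if k = 0 then -1 else if k = 1 then -z₁ else if k = 2 then 0
          else if k = 3 then z₁ else 1) ↔
      γ = -(z₁ / Real.sqrt (1 - z₁ ^ 2))
            / (4 * (z₁ * Real.log (1 + z₁) + (1 - z₁) * Real.log (1 - z₁)))) ∧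
    (z₁ = 1 / 2 →
      (IsCritical γ 3
          (fun k => if k = 0 then -1 else if k = 1 then -z₁ else if k = 2 then 0
            else if k = 3 then z₁ else 1) ↔
        γ = -1 / (2 * Real.sqrt 3 * Real.log (3 / 4)))) := by
  exact three_interface_criticality_general z₁ hz₁ γ hγ.ne'
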